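/- arXiv:2103.12487 — 7 statements merged into one kernel-verified Lean document; each statement's English description precedes it below -/
import Mathlib

section
/- Let n ≥ 1, let b ≥ 0 and c_1,…,c_n > 0 be reals, and let M ∈ ℝ with Σ_{i=1}^n b/(2·c_i) > M. Then the supremum of Σ_{i=1}^n ( b·x_i − c_i·x_i² ) over all x ∈ ℝⁿ with Σ_{i=1}^n x_i ≤ M equals b·M − M² / ( Σ_{i=1}^n 1/c_i ), and it is attained at the point x_i = M / ( c_i · Σ_{j=1}^n 1/c_j ). -/
open Finset Real

/-!
Write `S = ∑ 1 / c i` and `t i = M / (c i * S)`. All partial derivatives of the objective at `t`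
equal the multiplier `b - 2 * M / S`, which is positive exactly because `M < ∑ b / (2 * c i)`.
By concavity the objective at `x` is at most its tangent plane at `t`, that is
`(b - 2 * M / S) * ∑ x i + M ^ 2 / S`, and this is at most its value at `∑ x i = M`, namely
`b * M - M ^ 2 / S`. The point `t` satisfies `∑ t i = M` and attains this value.
-/

theorem stmt6 (n : ℕ) (hn : 1 ≤ n) (b : ℝ) (hb : 0 ≤ b)
    (c : Fin n → ℝ) (hc : ∀ i, 0 < c i) (M : ℝ)
    (hM : M < ∑ i, b / (2 * c i)) :
    IsGreatest
      {y : ℝ | ∃ x : Fin n → ℝ, (∑ i, x i) ≤ M ∧ y = ∑ i, (b * x i - c i * (x i) ^ 2)}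
      (b * M - M ^ 2 / ∑ i, 1 / c i)
    ∧ (∑ i, M / (c i * ∑ j, 1 / c j)) ≤ M
    ∧ (∑ i, (b * (M / (c i * ∑ j, 1 / c j))
          - c i * (M / (c i * ∑ j, 1 / c j)) ^ 2))
        = b * M - M ^ 2 / ∑ i, 1 / c i := by
  have hS : 0 < ∑ i, 1 / c i :=
    Finset.sum_pos (fun i _ => one_div_pos.mpr (hc i)) ⟨⟨0, hn⟩, Finset.mem_univ _⟩
  have hM' : M < b / 2 * ∑ i, 1 / c i := by
    refine hM.trans_eq ?_
    rw [Finset.mul_sum]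
    exact Finset.sum_congr rfl fun i _ => by have := (hc i).ne'; field_simp
  obtain ⟨S, hSdef⟩ : ∃ S, S = ∑ i, 1 / c i := ⟨_, rfl⟩
  rw [← hSdef] at hS hM' ⊢
  have hsum : ∑ i, M / (c i * S) = M := by
    have h : ∀ i, M / (c i * S) = M / S * (1 / c i) := fun i => by
      have := (hc i).ne'; field_simp
    simp_rw [h]
    rw [← Finset.mul_sum, ← hSdef]
    field_simp
  have hval : ∑ i, (b * (M / (c i * S)) - c i * (M / (c i * S)) ^ 2) = b * M - M ^ 2 / S := by
    have h : ∀ i, b * (M / (c i * S)) - c i * (M / (c i * S)) ^ 2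
        = (b - M / S) * (M / (c i * S)) := fun i => by
      have := (hc i).ne'; field_simp
    simp_rw [h]
    rw [← Finset.mul_sum, hsum]
    ring
  refine ⟨⟨⟨_, hsum.le, hval.symm⟩, ?_⟩, hsum.le, hval⟩
  rintro _ ⟨x, hx, rfl⟩
  have hmult : 0 ≤ b - 2 * (M / S) := by
    have : M / S < b / 2 := (div_lt_iff₀ hS).mpr hM'
    linarith
  calc ∑ i, (b * x i - c i * x i ^ 2)
      ≤ ∑ i, ((b - 2 * (M / S)) * x i + M / S * (M / (c i * S))) := by
        refine Finset.sum_le_sum fun i _ => ?_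
        -- In each coordinate the tangent line exceeds the objective by a nonnegative multiple of a square.
        have hsq : 0 ≤ c i * (x i - M / (c i * S)) ^ 2 := mul_nonneg (hc i).le (sq_nonneg _)
        have h : c i * (x i - M / (c i * S)) ^ 2
            = c i * x i ^ 2 - 2 * (M / S) * x i + M / S * (M / (c i * S)) := by
          have := (hc i).ne'; field_simp; ring
        linarith
    _ = (b - 2 * (M / S)) * ∑ i, x i + M / S * M := by
        rw [Finset.sum_add_distrib, ← Finset.mul_sum, ← Finset.mul_sum, hsum]
    _ ≤ (b - 2 * (M / S)) * M + M / S * M := by gcongr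
    _ = b * M - M ^ 2 / S := by ring
end

section
/- Let b > 0 and c > 0 be reals and let T₀, T be natural numbers with T₀ < T and b·√T₀ > c. Then Σ_{t=T₀+1}^{T} 1 / ( b·t^{3/2} − c·t ) ≤ 2 / ( b·√T₀ − c ). -/
/-!
The sum is dominated by a telescoping one. With `s = √(t + 1)` and `r = √t`,
`2 / (b r - c) - 2 / (b s - c) = 2 b (s - r) / ((b r - c) (b s - c))`, and since
`(s - r) (s + r) = 1` and `(b r - c) (s + r) ≤ 2 b s²`, this is at least
`1 / (s² (b s - c))`, the summand at `t + 1`. Hence the sum is at most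
`2 / (b √T₀ - c) - 2 / (b √T - c)`, and the subtracted term is nonnegative.
-/

open Finset Real

lemma term_le_telescoping (b c r s : ℝ) (hb : 0 < b) (hc : 0 < c) (hr : 0 ≤ r)
    (hrs : s ^ 2 = r ^ 2 + 1) (hs : 0 < s) (h : c < b * r) :
    1 / (s ^ 2 * (b * s - c)) ≤ 2 / (b * r - c) - 2 / (b * s - c) := by
  have hlt : r < s := by nlinarith
  have h1 : 0 < b * r - c := by linarith
  have h2 : 0 < b * s - c := by nlinarith
  have key : b * r - c ≤ 2 * b * (s - r) * s ^ 2 := by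
    have h3 : (s - r) * (s + r) = 1 := by linarith [hrs, sq_sub_sq s r]
    have h4 : (b * r - c) * (s + r) ≤ 2 * b * s ^ 2 := by
      have h5 : b * r - c ≤ b * s := by nlinarith
      calc (b * r - c) * (s + r) ≤ (b * s) * (s + s) := by gcongr
        _ = 2 * b * s ^ 2 := by ring
    calc b * r - c = (s - r) * ((b * r - c) * (s + r)) := by
          linear_combination (-(b * r - c)) * h3
      _ ≤ (s - r) * (2 * b * s ^ 2) := mul_le_mul_of_nonneg_left h4 (by linarith)
      _ = 2 * b * (s - r) * s ^ 2 := by ring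
  have e : 2 / (b * r - c) - 2 / (b * s - c)
      = 2 * b * (s - r) / ((b * r - c) * (b * s - c)) := by
    rw [div_sub_div _ _ h1.ne' h2.ne']
    ring
  rw [e, div_le_div_iff₀ (by positivity) (by positivity)]
  nlinarith [mul_le_mul_of_nonneg_right key h2.le]

lemma rpow_three_halves_eq (x : ℝ) (hx : 0 ≤ x) : x ^ ((3 : ℝ) / 2) = x * √x := by
  rw [Real.sqrt_eq_rpow, show (3 : ℝ) / 2 = 1 + 1 / 2 by norm_num,
    Real.rpow_add_of_nonneg hx (by norm_num) (by norm_num), Real.rpow_one]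

theorem stmt9 (b c : ℝ) (hb : 0 < b) (hc : 0 < c) (T₀ T : ℕ)
    (hT : T₀ < T) (hbT : b * Real.sqrt T₀ > c) :
    (∑ t ∈ Finset.Icc (T₀ + 1) T, 1 / (b * (t : ℝ) ^ ((3 : ℝ) / 2) - c * t))
      ≤ 2 / (b * Real.sqrt T₀ - c) := by
  have hpos : ∀ n : ℕ, T₀ ≤ n → c < b * √(n : ℝ) := fun n hn =>
    lt_of_lt_of_le hbT (by gcongr)
  have main : ∀ n : ℕ, T₀ ≤ n →
      (∑ t ∈ Finset.Icc (T₀ + 1) n, 1 / (b * (t : ℝ) ^ ((3 : ℝ) / 2) - c * t))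
        ≤ 2 / (b * √(T₀ : ℝ) - c) - 2 / (b * √(n : ℝ) - c) := by
    intro n hn
    induction n, hn using Nat.le_induction with
    | base => simp
    | succ n hn ih =>
      rw [Finset.sum_Icc_succ_top (by omega)]
      have hn0 : (0 : ℝ) ≤ ((n + 1 : ℕ) : ℝ) := Nat.cast_nonneg _
      have hsq : √((n + 1 : ℕ) : ℝ) ^ 2 = ((n + 1 : ℕ) : ℝ) := Real.sq_sqrt hn0
      have hstep := term_le_telescoping b c (√(n : ℝ)) (√((n + 1 : ℕ) : ℝ)) hb hc
        (Real.sqrt_nonneg _)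
        (by rw [hsq, Real.sq_sqrt (Nat.cast_nonneg n)]; push_cast; ring)
        (Real.sqrt_pos.2 (by positivity)) (hpos n hn)
      rw [hsq] at hstep
      have e : b * ((n + 1 : ℕ) : ℝ) ^ ((3 : ℝ) / 2) - c * ((n + 1 : ℕ) : ℝ)
          = ((n + 1 : ℕ) : ℝ) * (b * √((n + 1 : ℕ) : ℝ) - c) := by
        rw [rpow_three_halves_eq _ hn0]
        ring
      rw [e]
      linarith
  have hlast : 0 ≤ 2 / (b * √(T : ℝ) - c) :=
    div_nonneg (by norm_num) (by linarith [hpos T hT.le])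
  linarith [main T hT.le]
end

section
/- Let b > 0 and c > 0 be reals and let T₀, T be natural numbers with T₀ < T and b·√T₀ ≥ 2c. Then Σ_{t=T₀+1}^{T} 1 / ( b·t^{3/2} − c·t ) ≤ 2/c. -/
/-!
Write `s = √t`, so each denominator is `b s³ - c s²`. Since `b s ≥ b √T₀ ≥ 2 c`, it is at least
`b s³ / 2`, and the term is at most `(2 / b) t ^ (-3/2)`. With `u = √(t - 1)` one has
`1 / u - 1 / s = 1 / (u s (s + u)) ≥ 1 / (2 s³)`, so the term is at most `(4 / b) (1 / u - 1 / s)`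
(`term_le_telescope`). These bounds telescope to at most `4 / (b √T₀) ≤ 2 / c`.
-/

open Finset Real

lemma rpow_three_halves_eq_sqrt_pow (x : ℝ) (hx : 0 ≤ x) : x ^ ((3 : ℝ) / 2) = √x ^ 3 := by
  rw [Real.sqrt_eq_rpow, ← Real.rpow_natCast, ← Real.rpow_mul hx]
  norm_num

/-- The telescoping bound on one term, with `s` and `u` in the roles of `√t` and `√(t - 1)`. -/
lemma term_le_telescope (b c s u : ℝ) (hb : 0 < b) (hu : 0 < u) (hs : 0 < s)
    (hsu : s ^ 2 = u ^ 2 + 1) (hbs : 2 * c ≤ b * s) :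
    1 / (b * s ^ 3 - c * s ^ 2) ≤ 4 / b * (1 / u - 1 / s) := by
  have hus : u ≤ s := by nlinarith
  have h1 : 1 / u - 1 / s = 1 / (u * s * (s + u)) := by
    field_simp
    linarith
  have h2 : u * s * (s + u) ≤ 2 * s ^ 3 := by
    have h : u * (s + u) ≤ s * (s + s) := by gcongr
    nlinarith
  have h3 : b * s ^ 3 / 2 ≤ b * s ^ 3 - c * s ^ 2 := by
    nlinarith [mul_le_mul_of_nonneg_right hbs (sq_nonneg s)]
  calc 1 / (b * s ^ 3 - c * s ^ 2) ≤ 1 / (b * s ^ 3 / 2) :=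
        one_div_le_one_div_of_le (by positivity) h3
    _ = 4 / b * (1 / (2 * s ^ 3)) := by
        field_simp
        norm_num
    _ ≤ 4 / b * (1 / (u * s * (s + u))) := by gcongr
    _ = _ := by rw [h1]

theorem stmt10 (b c : ℝ) (hb : 0 < b) (hc : 0 < c) (T₀ T : ℕ)
    (hT : T₀ < T) (hbT : b * Real.sqrt T₀ ≥ 2 * c) :
    (∑ t ∈ Finset.Icc (T₀ + 1) T, 1 / (b * (t : ℝ) ^ ((3 : ℝ) / 2) - c * t))
      ≤ 2 / c := by
  have hs0 : 0 < √(T₀ : ℝ) := by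
    by_contra! h
    nlinarith
  have key : ∀ n, T₀ ≤ n →
      (∑ t ∈ Finset.Icc (T₀ + 1) n, 1 / (b * (t : ℝ) ^ ((3 : ℝ) / 2) - c * t))
        ≤ 4 / b * (1 / √(T₀ : ℝ) - 1 / √(n : ℝ)) := by
    intro n hn
    induction n, hn using Nat.le_induction with
    | base => simp
    | succ n hn ih =>
      rw [Finset.sum_Icc_succ_top (by omega)]
      have hn0 : √(T₀ : ℝ) ≤ √(n : ℝ) := Real.sqrt_le_sqrt (by exact_mod_cast hn)
      have hn1 : √(n : ℝ) ≤ √((n + 1 : ℕ) : ℝ) := Real.sqrt_le_sqrt (by push_cast; linarith)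
      have hsq : √((n + 1 : ℕ) : ℝ) ^ 2 = ((n + 1 : ℕ) : ℝ) := Real.sq_sqrt (by positivity)
      have hsq' : √(n : ℝ) ^ 2 = (n : ℝ) := Real.sq_sqrt (by positivity)
      have h := term_le_telescope b c (√((n + 1 : ℕ) : ℝ)) (√(n : ℝ)) hb (by linarith)
        (by linarith) (by rw [hsq, hsq']; push_cast; ring)
        (by nlinarith [mul_le_mul_of_nonneg_left (hn0.trans hn1) hb.le])
      rw [rpow_three_halves_eq_sqrt_pow _ (by positivity)]
      rw [hsq] at h
      linarith
  calc _ ≤ 4 / b * (1 / √(T₀ : ℝ) - 1 / √(T : ℝ)) := key T hT.le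
    _ ≤ 4 / b * (1 / √(T₀ : ℝ)) := by
        gcongr
        exact sub_le_self _ (by positivity)
    _ = 4 / (b * √(T₀ : ℝ)) := by field_simp
    _ ≤ 4 / (2 * c) := by gcongr
    _ = 2 / c := by
        field_simp
        norm_num
end

section
/- Let x be a real number with 0 < x ≤ 1, and let w ≥ 1 be a real number satisfying w·e^{−w} = x/e. Then 1 + √(2·log(1/x)) + (2/3)·log(1/x) ≤ w ≤ 1 + √(2·log(1/x)) + log(1/x). -/
open Real

/-!
Put `s = √(2 log (1/x))`. Taking logarithms, the equation for `w` becomes `g w = s² / 2`, where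
`g t = t - 1 - log t` is strictly increasing on `[1, ∞)`. The bounds are therefore equivalent to
`g (1 + s + s²/3) ≤ s²/2 ≤ g (1 + s + s²/2)`, that is, to `s - s²/6 ≤ log (1 + s + s²/3)` and
`log (1 + s + s²/2) ≤ s`. The latter is the quadratic Taylor bound for `exp`; the former is
`sub_sq_div_six_le_log`.
-/

/-- Both sides agree at `s = 0`, and the derivative of the difference of the two sides is
`(s³/9) / (1 + s + s²/3)`. -/
lemma sub_sq_div_six_le_log {s : ℝ} (hs : 0 ≤ s) :
    s - s ^ 2 / 6 ≤ log (1 + s + s ^ 2 / 3) := by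
  have hd : ∀ t : ℝ, 0 ≤ t →
      HasDerivAt (fun t : ℝ => log (1 + t + t ^ 2 / 3) - (t - t ^ 2 / 6))
        ((t ^ 3 / 9) / (1 + t + t ^ 2 / 3)) t := by
    intro t ht
    have hpos : 0 < 1 + t + t ^ 2 / 3 := by positivity
    have h1 : HasDerivAt (fun t : ℝ => 1 + t + t ^ 2 / 3) (1 + 2 * t / 3) t := by
      refine (((hasDerivAt_id' t).const_add 1).add
        (((hasDerivAt_id' t).pow 2).div_const 3)).congr_deriv ?_
      norm_num
    have h2 : HasDerivAt (fun t : ℝ => t - t ^ 2 / 6) (1 - t / 3) t := by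
      refine ((hasDerivAt_id' t).sub (((hasDerivAt_id' t).pow 2).div_const 6)).congr_deriv ?_
      norm_num
      ring
    refine ((h1.log hpos.ne').sub h2).congr_deriv ?_
    field_simp
    ring
  have hmono : MonotoneOn (fun t : ℝ => log (1 + t + t ^ 2 / 3) - (t - t ^ 2 / 6))
      (Set.Ici 0) := by
    apply monotoneOn_of_deriv_nonneg (convex_Ici 0)
    · exact fun t ht => (hd t ht).continuousAt.continuousWithinAt
    · intro t ht
      rw [interior_Ici] at ht
      exact (hd t (le_of_lt ht)).differentiableAt.differentiableWithinAt
    · intro t ht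
      rw [interior_Ici] at ht
      have ht0 : 0 ≤ t := le_of_lt ht
      rw [(hd t ht0).deriv]
      positivity
  have h := hmono (Set.mem_Ici.2 le_rfl) (Set.mem_Ici.2 hs) hs
  norm_num at h
  linarith

lemma sub_log_lt_sub_log {a b : ℝ} (ha : 1 ≤ a) (hab : a < b) : a - log a < b - log b := by
  have ha0 : 0 < a := by linarith
  have hb0 : 0 < b := by linarith
  have h1 : log (b / a) < b / a - 1 :=
    log_lt_sub_one_of_pos (by positivity) (by rw [Ne, div_eq_one_iff_eq ha0.ne']; exact hab.ne')
  rw [log_div hb0.ne' ha0.ne'] at h1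
  have h2 : b / a - 1 ≤ b - a := by
    rw [div_sub_one ha0.ne', div_le_iff₀ ha0]
    nlinarith
  linarith

theorem stmt11 (x w : ℝ) (hx0 : 0 < x) (hx1 : x ≤ 1) (hw : 1 ≤ w)
    (hweq : w * Real.exp (-w) = x / Real.exp 1) :
    1 + Real.sqrt (2 * Real.log (1 / x)) + (2 / 3) * Real.log (1 / x) ≤ w
    ∧ w ≤ 1 + Real.sqrt (2 * Real.log (1 / x)) + Real.log (1 / x) := by
  have hlog : log (1 / x) = w - 1 - log w := by
    have h := congrArg log hweq
    rw [log_mul (by linarith) (exp_pos _).ne', log_div hx0.ne' (exp_pos _).ne', log_exp,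
      log_exp] at h
    rw [one_div, log_inv]
    linarith
  have hu : 0 ≤ log (1 / x) := by
    rw [one_div, log_inv]
    linarith [log_nonpos hx0.le hx1]
  generalize log (1 / x) = u at *
  have hs : 0 ≤ √(2 * u) := sqrt_nonneg _
  have hsq : √(2 * u) ^ 2 = 2 * u := sq_sqrt (by linarith)
  generalize √(2 * u) = s at *
  obtain rfl : u = s ^ 2 / 2 := by linarith
  constructor
  · by_contra! hlt
    rw [show 1 + s + 2 / 3 * (s ^ 2 / 2) = 1 + s + s ^ 2 / 3 by ring] at hlt
    linarith [sub_log_lt_sub_log hw hlt, sub_sq_div_six_le_log hs]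
  · by_contra! hlt
    have hle : log (1 + s + s ^ 2 / 2) ≤ s :=
      (log_le_iff_le_exp (by positivity)).2 (quadratic_le_exp_of_nonneg hs)
    have h1 : 1 ≤ 1 + s + s ^ 2 / 2 := by nlinarith [sq_nonneg s]
    linarith [sub_log_lt_sub_log h1 hlt]
end

section
/- Let K ≥ 2, t ≥ 1, B ≥ 0, λ ∈ (0,1], let Δ_i > 0 for i = 1,…,K−1, and set S = Σ_{i=1}^{K−1} 1/Δ_i. Let a_1,…,a_{K−1} ∈ ℝ satisfy Σ_{i=1}^{K−1} a_i ≤ √(K−1). Then: (1) if B·(λ+1)·S/(2·λ·√t) ≤ √(K−1), then Σ_{i=1}^{K−1} ( B·(λ+1)·a_i/√t − λ·Δ_i·a_i² ) ≤ S·B²·(λ+1)²/(4·λ·t); and (2) if B·(λ+1)·S/(2·λ·√t) ≥ √(K−1), then Σ_{i=1}^{K−1} ( B·(λ+1)·a_i/√t − λ·Δ_i·a_i² ) ≤ √(K−1)·B·(λ+1)/√t − λ·(K−1)/S. -/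
open Finset Real

/-!
Write `c = B (λ + 1) / √t` and `r = √(K - 1)`. Completing the square gives, for every real
multiplier `m`, the Lagrangian (weak duality) bound
`∑ (c aᵢ - λ Δᵢ aᵢ²) ≤ (c - 2 m) ∑ aᵢ + m² S / λ`, which is `sum_le_of_multiplier`.
Taking `m = c / 2` removes the linear term and gives the unconstrained maximum `c² S / (4 λ)`.
Taking `m = λ r / S`, which satisfies `2 m ≤ c` in the second regime, allows the constraint
`∑ aᵢ ≤ r` to be used and gives `c r - λ r² / S`.
-/

/-- Weak duality: equality holds when `aᵢ = m / (λ Δᵢ)` for every `i`. -/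
lemma sum_le_of_multiplier {n : ℕ} (c lam m : ℝ) (hlam : 0 < lam) (Δ a : Fin n → ℝ)
    (hΔ : ∀ i, 0 < Δ i) :
    ∑ i, (c * a i - lam * Δ i * a i ^ 2)
      ≤ (c - 2 * m) * ∑ i, a i + m ^ 2 / lam * ∑ i, 1 / Δ i := by
  rw [Finset.mul_sum, Finset.mul_sum, ← Finset.sum_add_distrib]
  refine Finset.sum_le_sum fun i _ => ?_
  have hd := hΔ i
  have hsq : 0 ≤ (lam * Δ i * a i - m) ^ 2 / (lam * Δ i) := by positivity
  have heq : (lam * Δ i * a i - m) ^ 2 / (lam * Δ i)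
      = lam * Δ i * a i ^ 2 - 2 * m * a i + m ^ 2 / lam * (1 / Δ i) := by
    field_simp
    ring
  linarith

theorem stmt13 (K t : ℕ) (hK : 2 ≤ K) (ht : 1 ≤ t)
    (B lam : ℝ) (hB : 0 ≤ B) (hlam0 : 0 < lam) (hlam1 : lam ≤ 1)
    (Δ : Fin (K - 1) → ℝ) (hΔ : ∀ i, 0 < Δ i)
    (S : ℝ) (hS : S = ∑ i, 1 / Δ i)
    (a : Fin (K - 1) → ℝ)
    (ha : (∑ i, a i) ≤ Real.sqrt ((K : ℝ) - 1)) :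
    (B * (lam + 1) * S / (2 * lam * Real.sqrt t) ≤ Real.sqrt ((K : ℝ) - 1) →
      (∑ i, (B * (lam + 1) * a i / Real.sqrt t - lam * Δ i * (a i) ^ 2))
        ≤ S * B ^ 2 * (lam + 1) ^ 2 / (4 * lam * t))
    ∧ (B * (lam + 1) * S / (2 * lam * Real.sqrt t) ≥ Real.sqrt ((K : ℝ) - 1) →
      (∑ i, (B * (lam + 1) * a i / Real.sqrt t - lam * Δ i * (a i) ^ 2))
        ≤ Real.sqrt ((K : ℝ) - 1) * B * (lam + 1) / Real.sqrt t - lam * ((K : ℝ) - 1) / S) := by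
  have hK1 : (0 : ℝ) ≤ (K : ℝ) - 1 := by
    have : (2 : ℝ) ≤ K := by exact_mod_cast hK
    linarith
  have hSpos : 0 < S := by
    rw [hS]
    refine Finset.sum_pos (fun i _ => one_div_pos.mpr (hΔ i)) ⟨⟨0, by omega⟩, Finset.mem_univ _⟩
  have htpos : (0 : ℝ) < t := by exact_mod_cast ht
  have hst : 0 < Real.sqrt t := Real.sqrt_pos.mpr htpos
  have hst2 : Real.sqrt t ^ 2 = t := Real.sq_sqrt htpos.le
  have hr2 : Real.sqrt ((K : ℝ) - 1) ^ 2 = (K : ℝ) - 1 := Real.sq_sqrt hK1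
  set r := Real.sqrt ((K : ℝ) - 1)
  set s := Real.sqrt (t : ℝ)
  obtain ⟨c, hc⟩ : ∃ c, c = B * (lam + 1) / s := ⟨_, rfl⟩
  have hsum : ∑ i, (B * (lam + 1) * a i / s - lam * Δ i * (a i) ^ 2)
      = ∑ i, (c * a i - lam * Δ i * a i ^ 2) := by
    refine Finset.sum_congr rfl fun i _ => ?_
    rw [hc]
    ring
  have key := fun m => sum_le_of_multiplier c lam m hlam0 Δ a hΔ
  rw [← hS] at key
  rw [hsum]
  constructor
  · intro _
    refine (key (c / 2)).trans_eq ?_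
    rw [hc, ← hst2]
    field_simp
    ring
  · intro h
    have hm : 0 ≤ c - 2 * (lam * r / S) := by
      have h1 : r ≤ c * S / (2 * lam) := by
        have : c * S / (2 * lam) = B * (lam + 1) * S / (2 * lam * s) := by
          rw [hc]
          field_simp
        rw [this]
        exact h
      rw [le_div_iff₀ (by positivity)] at h1
      have h2 : 2 * (lam * r / S) = r * (2 * lam) / S := by ring
      rw [h2, sub_nonneg, div_le_iff₀ hSpos]
      exact h1
    calc ∑ i, (c * a i - lam * Δ i * a i ^ 2)
        ≤ (c - 2 * (lam * r / S)) * ∑ i, a i + (lam * r / S) ^ 2 / lam * S := key _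
      _ ≤ (c - 2 * (lam * r / S)) * r + (lam * r / S) ^ 2 / lam * S := by gcongr
      _ = r * B * (lam + 1) / s - lam * ((K : ℝ) - 1) / S := by
        rw [← hr2, hc]
        field_simp
        ring
end

section
/- Let B > 0, S > 0, C > 0, K ≥ 2, T ≥ 1 be reals, let w ≥ 1 be a real number satisfying w·e^{−w} = C·S/( e·(K−1)·T ), and set α* = √( S·w / C ). Assume B·α* ≤ 1. Define h(B,α) = ( B/(2 − B·α) ) · [ (S/α)·( 3 + log( T(K−1)/S² ) ) + (2S/α)·log α + α·C ]. Then h(B,α*) ≤ B·( √(C·S/w) + √(C·S·w) + B·S + B·S·w ). -/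
/-!
The equation for `w` says exactly that `log (T (K - 1) α² / S²) = w - 1` at `α = αstar`, and
`αstar² = S w / C` gives `αstar C = S w / αstar`. The bracket therefore collapses to
`2 (S / αstar) (1 + w)`, and `2 / (2 - x) ≤ 1 + x` on `[0, 1]` with `x = B αstar` gives the bound,
since `S / αstar = √(C S / w)` and `S w / αstar = √(C S w)`.
-/

theorem stmt17 (B S C K T : ℝ) (hB : 0 < B) (hS : 0 < S) (hC : 0 < C)
    (hK : 2 ≤ K) (hT : 1 ≤ T)
    (w : ℝ) (hw : 1 ≤ w)
    (hweq : w * Real.exp (-w) = C * S / (Real.exp 1 * (K - 1) * T))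
    (αstar : ℝ) (hαstar : αstar = Real.sqrt (S * w / C))
    (hBα : B * αstar ≤ 1) :
    (B / (2 - B * αstar)) *
        ((S / αstar) * (3 + Real.log (T * (K - 1) / S ^ 2))
          + (2 * S / αstar) * Real.log αstar + αstar * C)
      ≤ B * (Real.sqrt (C * S / w) + Real.sqrt (C * S * w) + B * S + B * S * w) := by
  have hw0 : 0 < w := by linarith
  have hK1 : 0 < K - 1 := by linarith
  have hT0 : 0 < T := by linarith
  have ha : 0 < αstar := by rw [hαstar]; positivity
  have ha2 : αstar ^ 2 = S * w / C := by rw [hαstar]; exact Real.sq_sqrt (by positivity)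
  have ha2' : C * αstar ^ 2 = S * w := by rw [ha2]; field_simp
  have hs1 : Real.sqrt (C * S / w) = S / αstar := by
    rw [Real.sqrt_eq_iff_mul_self_eq (by positivity) (by positivity)]
    field_simp
    linarith
  have hs2 : Real.sqrt (C * S * w) = S * w / αstar := by
    rw [Real.sqrt_eq_iff_mul_self_eq (by positivity) (by positivity)]
    field_simp
    linarith
  have hlog : Real.log (T * (K - 1) / S ^ 2) + 2 * Real.log αstar = w - 1 := by
    have h2 : 2 * Real.log αstar = Real.log (αstar ^ 2) := by
      rw [Real.log_pow]; norm_num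
    rw [h2, ← Real.log_mul (by positivity) (by positivity), ha2, ← Real.log_exp (w - 1)]
    congr 1
    rw [Real.exp_neg] at hweq
    rw [Real.exp_sub]
    have := Real.exp_pos w
    have := Real.exp_pos 1
    field_simp at hweq ⊢
    linarith
  have hbr : (S / αstar) * (3 + Real.log (T * (K - 1) / S ^ 2))
      + (2 * S / αstar) * Real.log αstar + αstar * C = 2 * (S / αstar * (1 + w)) := by
    have h1 : αstar * C = S / αstar * w := by
      field_simp
      linarith
    rw [h1]
    linear_combination (S / αstar) * hlog
  have hx : 0 < B * αstar := by positivity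
  have hfrac : 2 / (2 - B * αstar) ≤ 1 + B * αstar := by
    rw [div_le_iff₀ (by linarith)]
    nlinarith
  rw [hbr, hs1, hs2]
  calc B / (2 - B * αstar) * (2 * (S / αstar * (1 + w)))
      = B * (S / αstar * (1 + w)) * (2 / (2 - B * αstar)) := by ring
    _ ≤ B * (S / αstar * (1 + w)) * (1 + B * αstar) := by gcongr
    _ = B * (S / αstar + S * w / αstar + B * S + B * S * w) := by
      field_simp
      ring
end

section
/- Let K ≥ 2, λ ∈ (0,1], set α = 2λ/(λ+1), let Δ_i > 0 for i = 1,…,K−1 with Δ_min = min_i Δ_i, and set S = Σ_{i=1}^{K−1} 1/Δ_i. Let t ≥ 1/( α²·Δ_min² ) be a natural number and let a_1,…,a_{K−1} ∈ ℝ. Then Σ_{i=1}^{K−1} ( (λ+1)·a_i/√t − ( λ·Δ_i − (λ+1)/(4√t) )·a_i² ) ≤ S·(λ+1)/(2·α·t) + Σ_{i=1}^{K−1} (λ+1) / ( 4·α²·Δ_i²·t^{3/2} − 2·α·Δ_i·t ). -/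
/-!
The inequality holds term by term. Write `s = √t`, `c = lam + 1` and `u = α Δ i`, so that
`lam * Δ i = c * u / 2` and the quadratic coefficient is `c (2 u s - 1) / (4 s)`. The threshold on
`t` says `1 ≤ u s`, which makes this coefficient positive. Completing the square bounds the term by
`c / (s (2 u s - 1))`, and this equals `c / (2 u s²) + c / (4 u² s³ - 2 u s²)`.
-/

open Finset Real

/-- Bound on a single summand; the defect is the square
`c (2us - 1) / (4s) * (a - 2 / (2us - 1))²`. -/
lemma summand_le {c u s a : ℝ} (hc : 0 < c) (hu : 0 < u) (hs : 0 < s) (hus : 1 ≤ u * s) :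
    c * a / s - (c * u / 2 - c / (4 * s)) * a ^ 2
      ≤ c / (2 * u * s ^ 2) + c / (4 * u ^ 2 * s ^ 3 - 2 * u * s ^ 2) := by
  have hd : 0 < 2 * u * s - 1 := by linarith
  have hden : 4 * u ^ 2 * s ^ 3 - 2 * u * s ^ 2 = 2 * u * s ^ 2 * (2 * u * s - 1) := by ring
  rw [hden]
  have hnn : 0 ≤ c * (2 * u * s - 1) / (4 * s) * (a - 2 / (2 * u * s - 1)) ^ 2 := by positivity
  have hsplit : c / (2 * u * s ^ 2) + c / (2 * u * s ^ 2 * (2 * u * s - 1))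
      - (c * a / s - (c * u / 2 - c / (4 * s)) * a ^ 2)
      = c * (2 * u * s - 1) / (4 * s) * (a - 2 / (2 * u * s - 1)) ^ 2 := by
    have := hd.ne'
    field_simp
    ring
  linarith

theorem stmt19 (K : ℕ) (hK : 2 ≤ K)
    (lam : ℝ) (hlam0 : 0 < lam) (hlam1 : lam ≤ 1)
    (α : ℝ) (hα : α = 2 * lam / (lam + 1))
    (Δ : Fin (K - 1) → ℝ) (hΔ : ∀ i, 0 < Δ i)
    (Δmin : ℝ) (hΔmin : IsLeast (Set.range Δ) Δmin)
    (S : ℝ) (hS : S = ∑ i, 1 / Δ i)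
    (t : ℕ) (ht : 1 / (α ^ 2 * Δmin ^ 2) ≤ (t : ℝ))
    (a : Fin (K - 1) → ℝ) :
    (∑ i, ((lam + 1) * a i / Real.sqrt t
        - (lam * Δ i - (lam + 1) / (4 * Real.sqrt t)) * (a i) ^ 2))
      ≤ S * (lam + 1) / (2 * α * t)
        + ∑ i, (lam + 1) /
            (4 * α ^ 2 * (Δ i) ^ 2 * (t : ℝ) ^ ((3 : ℝ) / 2) - 2 * α * Δ i * t) := by
  have hc : 0 < lam + 1 := by linarith
  have hα0 : 0 < α := by rw [hα]; positivity
  have hαc : lam = (lam + 1) * α / 2 := by rw [hα]; field_simp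
  obtain ⟨⟨i₀, hi₀⟩, hmin⟩ := hΔmin
  have hm0 : 0 < Δmin := hi₀ ▸ hΔ i₀
  have ht0 : (0 : ℝ) < t := lt_of_lt_of_le (by positivity) ht
  have hs : 0 < √(t : ℝ) := Real.sqrt_pos.2 ht0
  have hsq : √(t : ℝ) ^ 2 = t := Real.sq_sqrt ht0.le
  have hcube : (t : ℝ) ^ ((3 : ℝ) / 2) = √(t : ℝ) ^ 3 := by
    rw [Real.sqrt_eq_rpow, ← Real.rpow_natCast, ← Real.rpow_mul ht0.le]
    norm_num
  have hms : 1 ≤ α * Δmin * √(t : ℝ) := by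
    rw [div_le_iff₀ (by positivity)] at ht
    have h : 1 ≤ (α * Δmin * √(t : ℝ)) ^ 2 := by
      rw [mul_pow, hsq, mul_pow]
      linarith
    exact (one_le_sq_iff₀ (by positivity)).1 h
  rw [hS, Finset.sum_mul, Finset.sum_div, ← Finset.sum_add_distrib]
  refine Finset.sum_le_sum fun i _ => ?_
  have hi : 0 < Δ i := hΔ i
  have hus : 1 ≤ α * Δ i * √(t : ℝ) := by
    have : Δmin ≤ Δ i := hmin ⟨i, rfl⟩
    exact hms.trans (by gcongr)
  have key := summand_le (a := a i) hc (mul_pos hα0 hi) hs hus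
  have e₁ : lam * Δ i = (lam + 1) * (α * Δ i) / 2 := by
    linear_combination Δ i * hαc
  have e₂ : 1 / Δ i * (lam + 1) / (2 * α * t) = (lam + 1) / (2 * (α * Δ i) * t) := by
    field_simp
  rw [e₁, e₂, hcube]
  rw [hsq] at key
  have e₃ : 4 * α ^ 2 * Δ i ^ 2 * √(t : ℝ) ^ 3 - 2 * α * Δ i * t
      = 4 * (α * Δ i) ^ 2 * √(t : ℝ) ^ 3 - 2 * (α * Δ i) * t := by ring
  rw [e₃]
  exact key
end
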